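/- Fix T > 0 and let K be completely monotone with K(t₀) ≻ 0 for some t₀ > 0, and suppose there exists α ∈ (1/2,1] with sup_{t ∈ (0,T]} (t^{1−α}|K(t)| + t^{2−α}|K′(t)|) < ∞. Let η ∈ (1−α, 1]. Then C₀^η([0,T]; ℝ^d) ⊆ D(Γ) and Γ: C₀^η([0,T]; ℝ^d) → C₀([0,T]; ℝ^d) is a continuous linear operator. Moreover, for each x ∈ C([0,T]; ℝ^d) with Z(x) ∈ C₀^η([0,T]; ℝ^d) one has Γ(Z(x)) = x − x₀, and for each z ∈ C₀^η([0,T]; ℝ^d) one has Z(Γ(z)) = z. -/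

import Mathlib

open MeasureTheory Set Filter Matrix
open scoped ENNReal NNReal Topology

noncomputable section

def CompletelyMonotoneMat {d : ℕ} (K : ℝ → Matrix (Fin d) (Fin d) ℝ) : Prop :=
  (∀ i j, ContDiffOn ℝ (⊤ : ℕ∞) (fun t => K t i j) (Set.Ioi 0)) ∧
  ∀ (n : ℕ) (t : ℝ), 0 < t → ∀ v : Fin d → ℝ,
    0 ≤ (-1 : ℝ) ^ n *
      (v ⬝ᵥ (Matrix.of fun i j => iteratedDerivWithin n (fun s => K s i j) (Set.Ioi 0) t).mulVec v)

def IsResolventFirstKind {d : ℕ} (K : ℝ → Matrix (Fin d) (Fin d) ℝ)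
    (A : Matrix (Fin d) (Fin d) ℝ) (L₀ : ℝ → Matrix (Fin d) (Fin d) ℝ) : Prop :=
  (∀ T > (0:ℝ), ∀ i j, IntervalIntegrable (fun t => L₀ t i j) volume 0 T) ∧
  (∀ t > (0:ℝ), ∀ i j,
    (K t * A) i j + (∫ s in (0:ℝ)..t, (K (t - s) * L₀ s) i j) = (1 : Matrix (Fin d) (Fin d) ℝ) i j) ∧
  (∀ t > (0:ℝ), ∀ i j,
    (A * K t) i j + (∫ s in (0:ℝ)..t, (L₀ s * K (t - s)) i j) = (1 : Matrix (Fin d) (Fin d) ℝ) i j)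

noncomputable def zTransform {d : ℕ} (A : Matrix (Fin d) (Fin d) ℝ)
    (L₀ : ℝ → Matrix (Fin d) (Fin d) ℝ) (x : ℝ → Fin d → ℝ) (t : ℝ) : Fin d → ℝ :=
  A.mulVec (x t - x 0) + ∫ s in (0:ℝ)..t, (L₀ s).mulVec (x (t - s) - x 0)

noncomputable def matNorm {d e : ℕ} (M : Matrix (Fin d) (Fin e) ℝ) : ℝ :=
  ‖LinearMap.toContinuousLinearMap (Matrix.mulVecLin M)‖

noncomputable def matDeriv {d : ℕ} (K : ℝ → Matrix (Fin d) (Fin d) ℝ) (t : ℝ) :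
    Matrix (Fin d) (Fin d) ℝ :=
  Matrix.of fun i j => deriv (fun s => K s i j) t

noncomputable def gammaTransform {d : ℕ} (K : ℝ → Matrix (Fin d) (Fin d) ℝ)
    (z : ℝ → Fin d → ℝ) (t : ℝ) : Fin d → ℝ :=
  (K t).mulVec (z t) + ∫ s in (0:ℝ)..t, (matDeriv K (t - s)).mulVec (z s - z t)

def MemDomGamma {d : ℕ} (T : ℝ) (K : ℝ → Matrix (Fin d) (Fin d) ℝ)
    (z : ℝ → Fin d → ℝ) : Prop :=
  ContinuousOn z (Set.Icc 0 T) ∧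
  IntervalIntegrable (fun t => ‖(K t).mulVec (z t)‖) volume 0 T ∧
  IntervalIntegrable (fun t => ∫ s in (0:ℝ)..t, ‖(matDeriv K (t - s)).mulVec (z s - z t)‖)
    volume 0 T

def HolderOnIcc {d : ℕ} (η T : ℝ) (x : ℝ → Fin d → ℝ) : Prop :=
  ContinuousOn x (Set.Icc 0 T) ∧
  ∃ C : ℝ, ∀ s ∈ Set.Icc (0:ℝ) T, ∀ t ∈ Set.Icc (0:ℝ) T, ‖x t - x s‖ ≤ C * |t - s| ^ η

def HolderNormBound {d : ℕ} (η T : ℝ) (x : ℝ → Fin d → ℝ) (C : ℝ) : Prop :=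
  (∀ t ∈ Set.Icc (0:ℝ) T, ‖x t‖ ≤ C) ∧
  ∀ s ∈ Set.Icc (0:ℝ) T, ∀ t ∈ Set.Icc (0:ℝ) T, ‖x t - x s‖ ≤ C * |t - s| ^ η

open scoped Convolution
open Function (support)

/-!
`Γ z` is a derivative of Marchaud type: for a Hölder path `z` vanishing up to time `0`, an
integration by parts identifies it with `(k ⋆ z)'`, because the singularity of `k'` is compensated
by the increments of `z`. Writing `L` for the resolvent, `L ⋆ k = k ⋆ L = 1` on the half-line. If
`z = L ⋆ (x - x₀)`, then `Γ z = (k ⋆ L ⋆ (x - x₀))' = (1 ⋆ (x - x₀))' = x - x₀`; conversely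
`L ⋆ Γ z = L ⋆ (k ⋆ z)' = (L ⋆ k ⋆ z)' = (1 ⋆ z)' = z`.
-/

local notation:67 f:68 " ⋆ᵥ " y:67 => convolution f y (ContinuousLinearMap.id ℝ _) volume
local notation:67 f:68 " ⋆ₒ " g:67 => convolution f g (ContinuousLinearMap.compL ℝ _ _ _) volume

section Convolution

variable {E F G : Type*} [NormedAddCommGroup E] [NormedSpace ℝ E] [NormedAddCommGroup F]
  [NormedSpace ℝ F] [NormedAddCommGroup G] [NormedSpace ℝ G]

theorem support_convolution_subset_Ioi (L : E →L[ℝ] F →L[ℝ] G) {f : ℝ → E} {g : ℝ → F}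
    (hf : support f ⊆ Ioi 0) (hg : support g ⊆ Ioi 0) : support (f ⋆[L, volume] g) ⊆ Ioi 0 := by
  rw [← indicator_eq_self.2 hf, ← indicator_eq_self.2 hg,
    ← posConvolution_eq_convolution_indicator f g L volume]
  exact support_indicator_subset

theorem convolution_eq_intervalIntegral_of_eqOn_Ioo (L : E →L[ℝ] F →L[ℝ] G) {f f' : ℝ → E}
    {g g' : ℝ → F} {t : ℝ} (hf : support f ⊆ Ioi 0) (hg : support g ⊆ Ioi 0) (ht : 0 ≤ t)
    (hff' : EqOn f f' (Ioo 0 t)) (hgg' : EqOn g g' (Ioo 0 t)) :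
    (f ⋆[L, volume] g) t = ∫ s in 0..t, L (f' s) (g' (t - s)) := by
  rw [← indicator_eq_self.2 hf, ← indicator_eq_self.2 hg,
    ← posConvolution_eq_convolution_indicator f g L volume]
  rcases ht.eq_or_lt with rfl | ht
  · simp [posConvolution]
  rw [posConvolution, indicator_of_mem (mem_Ioi.2 ht), intervalIntegral.integral_of_le ht.le,
    intervalIntegral.integral_of_le ht.le, integral_Ioc_eq_integral_Ioo,
    integral_Ioc_eq_integral_Ioo]
  refine setIntegral_congr_fun measurableSet_Ioo fun s hs => ?_
  rw [hff' hs, hgg' ⟨sub_pos.2 hs.2, sub_lt_self t hs.1⟩]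

theorem convolutionExistsAt_of_bddAbove_norm (L : E →L[ℝ] F →L[ℝ] G) {f : ℝ → E} {g : ℝ → F}
    (hf : Integrable f) (hg : AEStronglyMeasurable g) (hbg : BddAbove (range fun t => ‖g t‖))
    (t : ℝ) : ConvolutionExistsAt f g t L volume :=
  BddAbove.convolutionExistsAt L (hbg.mono (image_subset_range _ _)) MeasurableSet.univ
    (subset_univ _) hf.integrableOn hg

theorem bddAbove_norm_convolution (L : E →L[ℝ] F →L[ℝ] G) {f : ℝ → E} {g : ℝ → F}
    (hf : Integrable f) (hg : BddAbove (range fun t => ‖g t‖)) :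
    BddAbove (range fun t => ‖(f ⋆[L, volume] g) t‖) := by
  obtain ⟨B, hB⟩ := hg
  refine ⟨∫ s, ‖L‖ * ‖f s‖ * B, forall_mem_range.2 fun t => norm_integral_le_of_norm_le ?_ ?_⟩
  · exact (hf.norm.const_mul _).mul_const B
  · exact Eventually.of_forall fun s =>
      L.le_of_opNorm₂_le_of_le le_rfl le_rfl (hB (mem_range_self _))

theorem convolution_assoc_of_bddAbove_norm {E' F' F'' : Type*} [NormedAddCommGroup E']
    [NormedSpace ℝ E'] [NormedAddCommGroup F'] [NormedSpace ℝ F'] [CompleteSpace F']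
    [NormedAddCommGroup F''] [NormedSpace ℝ F''] [CompleteSpace F''] [CompleteSpace G]
    {L : E →L[ℝ] E' →L[ℝ] F'} {L₂ : F' →L[ℝ] F →L[ℝ] G} {L₃ : E →L[ℝ] F'' →L[ℝ] G}
    {L₄ : E' →L[ℝ] F →L[ℝ] F''} (hL : ∀ x y z, L₂ (L x y) z = L₃ x (L₄ y z))
    {f : ℝ → E} {g : ℝ → E'} {y : ℝ → F} (hf : Integrable f) (hg : Integrable g)
    (hy : Continuous y) (hby : BddAbove (range fun t => ‖y t‖)) :
    (f ⋆[L, volume] g) ⋆[L₂, volume] y = f ⋆[L₃, volume] (g ⋆[L₄, volume] y) := by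
  have hby' : BddAbove (range fun t => ‖‖y t‖‖) := by simpa only [norm_norm] using hby
  ext t
  refine convolution_assoc L L₂ L₃ L₄ hL hf.1 hg.1 hy.aestronglyMeasurable
    (hf.ae_convolution_exists L hg) (ae_of_all _ fun s => ?_) ?_
  · exact convolutionExistsAt_of_bddAbove_norm _ hg.norm hy.norm.aestronglyMeasurable hby' s
  · exact convolutionExistsAt_of_bddAbove_norm _ hf.norm
      (hby'.continuous_convolution_right_of_integrable (.mul ℝ ℝ) hg.norm
        hy.norm).aestronglyMeasurable
      (bddAbove_norm_convolution _ hg.norm hby') t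

theorem hasDerivAt_convolution_right_of_bddAbove_norm (L : E →L[ℝ] F →L[ℝ] G)
    {f : ℝ → E} {g g' : ℝ → F} (hf : Integrable f) (hbg : BddAbove (range fun t => ‖g t‖))
    (hg : ∀ t, HasDerivAt g (g' t) t) (hg' : Continuous g')
    (hbg' : BddAbove (range fun t => ‖g' t‖)) (t : ℝ) :
    HasDerivAt (f ⋆[L, volume] g) ((f ⋆[L, volume] g') t) t := by
  have hgc : Continuous g := continuous_iff_continuousAt.2 fun t => (hg t).continuousAt
  obtain ⟨B, hB⟩ := hbg'
  refine (hasDerivAt_integral_of_dominated_loc_of_deriv_le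
    (F := fun x s => L (f s) (g (x - s))) (F' := fun x s => L (f s) (g' (x - s)))
    (bound := fun s => ‖L‖ * ‖f s‖ * B) univ_mem (Eventually.of_forall fun x => ?_)
    ?_ ?_ ?_ ?_ ?_).2
  · exact hf.1.convolution_integrand_snd' L hgc.aestronglyMeasurable
  · exact convolutionExistsAt_of_bddAbove_norm L hf hgc.aestronglyMeasurable hbg t
  · exact hf.1.convolution_integrand_snd' L hg'.aestronglyMeasurable
  · exact Eventually.of_forall fun s x _ =>
      L.le_of_opNorm₂_le_of_le le_rfl le_rfl (hB (mem_range_self _))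
  · exact (hf.norm.const_mul _).mul_const B
  · exact Eventually.of_forall fun s x _ =>
      (L (f s)).hasFDerivAt.comp_hasDerivAt x ((hg (x - s)).comp_sub_const x s)

end Convolution

section OperatorConvolution

variable {E F G : Type*} [NormedAddCommGroup E] [NormedSpace ℝ E] [NormedAddCommGroup F]
  [NormedSpace ℝ F] [NormedAddCommGroup G] [NormedSpace ℝ G]

theorem clm_apply_convolution [CompleteSpace F] [CompleteSpace G] (A : F →L[ℝ] G)
    {f : ℝ → E →L[ℝ] F} {y : ℝ → E} (hf : Integrable f) (hy : Continuous y)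
    (hby : BddAbove (range fun t => ‖y t‖)) (t : ℝ) :
    A ((f ⋆ᵥ y) t) = ((fun s => A ∘L f s) ⋆ᵥ y) t :=
  (A.integral_comp_comm
    (convolutionExistsAt_of_bddAbove_norm _ hf hy.aestronglyMeasurable hby t)).symm

theorem convolution_clm_apply_add_convolution [CompleteSpace F] [CompleteSpace G] (A : E →L[ℝ] F)
    {f : ℝ → F →L[ℝ] G} {g : ℝ → E →L[ℝ] F} {y : ℝ → E} (hf : Integrable f) (hg : Integrable g)
    (hy : Continuous y) (hby : BddAbove (range fun t => ‖y t‖)) :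
    f ⋆ᵥ (fun s => A (y s) + (g ⋆ᵥ y) s) = ((fun s => f s ∘L A) + f ⋆ₒ g) ⋆ᵥ y := by
  have hfA : Integrable fun s => f s ∘L A :=
    ((ContinuousLinearMap.compL ℝ E F G).flip A).integrable_comp hf
  have hfg : Integrable (f ⋆ₒ g) := hf.integrable_convolution _ hg
  have hgy : Continuous (g ⋆ᵥ y) := hby.continuous_convolution_right_of_integrable _ hg hy
  have hexists := convolutionExistsAt_of_bddAbove_norm (.id ℝ (E →L[ℝ] G)) hfA
    hy.aestronglyMeasurable hby
  ext t
  rw [(hexists t).add_distrib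
      (convolutionExistsAt_of_bddAbove_norm _ hfg hy.aestronglyMeasurable hby t),
    convolution_assoc_of_bddAbove_norm (L₃ := .id ℝ _) (L₄ := .id ℝ _) (fun _ _ _ => rfl) hf hg hy
      hby]
  exact ConvolutionExistsAt.distrib_add (hexists t) (convolutionExistsAt_of_bddAbove_norm _ hf
    hgy.aestronglyMeasurable (bddAbove_norm_convolution _ hg hby) t)

theorem clm_apply_convolution_add_convolution [CompleteSpace F] [CompleteSpace G] (A : F →L[ℝ] G)
    {f : ℝ → E →L[ℝ] F} {g : ℝ → F →L[ℝ] G} {y : ℝ → E} (hf : Integrable f) (hg : Integrable g)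
    (hy : Continuous y) (hby : BddAbove (range fun t => ‖y t‖)) :
    (fun t => A ((f ⋆ᵥ y) t) + (g ⋆ᵥ (f ⋆ᵥ y)) t) = ((fun s => A ∘L f s) + g ⋆ₒ f) ⋆ᵥ y := by
  have hAf : Integrable fun s => A ∘L f s :=
    (ContinuousLinearMap.compL ℝ E F G A).integrable_comp hf
  have hgf : Integrable (g ⋆ₒ f) := hg.integrable_convolution _ hf
  ext t
  rw [(convolutionExistsAt_of_bddAbove_norm _ hAf hy.aestronglyMeasurable hby t).add_distrib
      (convolutionExistsAt_of_bddAbove_norm _ hgf hy.aestronglyMeasurable hby t),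
    convolution_assoc_of_bddAbove_norm (L₃ := .id ℝ _) (L₄ := .id ℝ _) (fun _ _ _ => rfl) hg hf hy
      hby, clm_apply_convolution A hf hy hby]

theorem convolution_eq_intervalIntegral_of_ae_eq_id {h : ℝ → E →L[ℝ] E} {y : ℝ → E} {T t : ℝ}
    (hh : support h ⊆ Ioi 0) (hid : ∀ᵐ s ∂volume.restrict (Ioc 0 T), h s = .id ℝ E)
    (hy : support y ⊆ Ioi 0) (ht : t ∈ Icc 0 T) : (h ⋆ᵥ y) t = ∫ s in 0..t, y s := by
  rw [convolution_eq_intervalIntegral_of_eqOn_Ioo _ hh hy ht.1 (eqOn_refl _ _) (eqOn_refl _ _)]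
  trans ∫ s in 0..t, y (t - s)
  · refine intervalIntegral.integral_congr_ae_restrict ?_
    rw [uIoc_of_le ht.1]
    filter_upwards [ae_restrict_of_ae_restrict_of_subset (Ioc_subset_Ioc_right ht.2) hid] with s hs
    rw [hs]
    rfl
  · simp

theorem integrable_indicator_Ioc {V : Type*} [NormedAddCommGroup V] {f : ℝ → V} {T : ℝ}
    (hf : IntegrableOn f (Ioc 0 T)) : Integrable ((Ioc 0 T).indicator f) :=
  hf.integrable_indicator measurableSet_Ioc

theorem support_indicator_Ioc_subset_Ioi {V : Type*} [Zero V] (f : ℝ → V) (T : ℝ) :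
    support ((Ioc 0 T).indicator f) ⊆ Ioi 0 :=
  support_indicator_subset.trans Ioc_subset_Ioi_self

theorem eqOn_indicator_Ioc_Ioo {V : Type*} [Zero V] (f : ℝ → V) {T t : ℝ} (ht : t ≤ T) :
    EqOn ((Ioc 0 T).indicator f) f (Ioo 0 t) :=
  eqOn_indicator.mono (Ioo_subset_Ioc_self.trans (Ioc_subset_Ioc_right ht))

theorem indicator_convolution_indicator_eq_intervalIntegral (L : E →L[ℝ] F →L[ℝ] G) (f : ℝ → E)
    (g : ℝ → F) {T t : ℝ} (ht : t ∈ Icc 0 T) :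
    ((Ioc 0 T).indicator f ⋆[L, volume] (Ioc 0 T).indicator g) t =
      ∫ s in 0..t, L (f s) (g (t - s)) :=
  convolution_eq_intervalIntegral_of_eqOn_Ioo L (support_indicator_Ioc_subset_Ioi f T)
    (support_indicator_Ioc_subset_Ioi g T) ht.1 (eqOn_indicator_Ioc_Ioo f ht.2)
    (eqOn_indicator_Ioc_Ioo g ht.2)

theorem ae_intervalIntegrable_apply_comp_sub (L : E →L[ℝ] F →L[ℝ] G) {f : ℝ → E} {g : ℝ → F}
    {T : ℝ} (hf : IntegrableOn f (Ioc 0 T)) (hg : IntegrableOn g (Ioc 0 T)) :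
    ∀ᵐ t ∂volume.restrict (Ioc 0 T),
      IntervalIntegrable (fun s => L (f s) (g (t - s))) volume 0 t := by
  filter_upwards [ae_restrict_of_ae
    ((integrable_indicator_Ioc hf).ae_convolution_exists L (integrable_indicator_Ioc hg)),
    self_mem_ae_restrict measurableSet_Ioc] with t hexists ht
  rw [intervalIntegrable_iff_integrableOn_Ioo_of_le ht.1.le]
  refine (Integrable.integrableOn hexists).congr_fun (fun s hs => ?_) measurableSet_Ioo
  simp only [eqOn_indicator_Ioc_Ioo f ht.2 hs,
    eqOn_indicator_Ioc_Ioo g ht.2 ⟨sub_pos.2 hs.2, sub_lt_self t hs.1⟩]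

end OperatorConvolution

/-! ### Singular kernels -/

section CausalPath

variable {E F G : Type*} [NormedAddCommGroup E] [NormedAddCommGroup F] [NormedAddCommGroup G]

/-- A bounded continuous path on the whole line that vanishes up to time `0`. Paths on `[0, T]`
starting at `0` are extended to such paths, so that Volterra integrals become convolutions. -/
structure IsCausalPath (y : ℝ → E) : Prop where
  continuous : Continuous y
  bddAbove_norm : BddAbove (range fun t => ‖y t‖)
  support_subset : support y ⊆ Ioi 0

theorem IsCausalPath.eq_zero_of_nonpos {y : ℝ → E} (hy : IsCausalPath y) {t : ℝ} (ht : t ≤ 0) :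
    y t = 0 :=
  Function.notMem_support.1 fun h => (hy.support_subset h).not_ge ht

variable [NormedSpace ℝ E] [NormedSpace ℝ F] [NormedSpace ℝ G]

theorem IsCausalPath.convolution (L : E →L[ℝ] F →L[ℝ] G) {f : ℝ → E} {y : ℝ → F}
    (hf : Integrable f) (hf0 : support f ⊆ Ioi 0) (hy : IsCausalPath y) :
    IsCausalPath (f ⋆[L, volume] y) where
  continuous := hy.bddAbove_norm.continuous_convolution_right_of_integrable L hf hy.continuous
  bddAbove_norm := bddAbove_norm_convolution L hf hy.bddAbove_norm
  support_subset := support_convolution_subset_Ioi L hf0 hy.support_subset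

end CausalPath

theorem norm_sub_le_of_holderWith {E : Type*} [SeminormedAddCommGroup E] {C η : ℝ≥0} {z : ℝ → E}
    (hz : HolderWith C η z) (t : ℝ) {u : ℝ} (hu : 0 ≤ u) :
    ‖z (t - u) - z t‖ ≤ C * u ^ (η : ℝ) := by
  simpa [dist_eq_norm, abs_of_nonneg hu] using hz.dist_le (t - u) t

section SingularKernel

variable {E F : Type*} [NormedAddCommGroup E] [NormedSpace ℝ E] [NormedAddCommGroup F]
  [NormedSpace ℝ F]

/-- An operator-valued kernel on `(0, T]` with derivative `k'` whose singularity at `0` is no worse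
than that of the fractional kernel `t ^ (α - 1)`. -/
structure IsSingularKernel (k k' : ℝ → E →L[ℝ] F) (T α M : ℝ) : Prop where
  hasDerivAt : ∀ t ∈ Ioc 0 T, HasDerivAt k (k' t) t
  norm_le : ∀ t ∈ Ioc 0 T, ‖k t‖ ≤ M * t ^ (α - 1)
  norm_deriv_le : ∀ t ∈ Ioc 0 T, ‖k' t‖ ≤ M * t ^ (α - 2)

/-- The transformation `Γ` of a kernel `k` with derivative `k'`. -/
def volterraGamma (k k' : ℝ → E →L[ℝ] F) (z : ℝ → E) (t : ℝ) : F :=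
  k t (z t) + ∫ s in 0..t, k' (t - s) (z s - z t)

/-- The Marchaud form of the derivative of `t ↦ ∫ u in 0..T, k u (z (t - u))`, which only uses
increments of `z`. On causal paths it agrees with `Γ` up to time `T`, but its domain of integration
does not depend on `t`. -/
def marchaudDeriv (k k' : ℝ → E →L[ℝ] F) (T : ℝ) (z : ℝ → E) (t : ℝ) : F :=
  k T (z t - z (t - T)) + ∫ u in 0..T, k' u (z (t - u) - z t)

variable {k k' : ℝ → E →L[ℝ] F} {T α M : ℝ} {C η : ℝ≥0} {z : ℝ → E}

theorem integrableOn_Ioc_rpow {r : ℝ} (hr : -1 < r) (T : ℝ) :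
    IntegrableOn (fun u : ℝ => u ^ r) (Ioc 0 T) :=
  (intervalIntegral.intervalIntegrable_rpow' hr (a := 0) (b := T)).1

namespace IsSingularKernel

theorem integrableOn (hk : IsSingularKernel k k' T α M) (hα : 0 < α) :
    IntegrableOn k (Ioc 0 T) := by
  have hcont : ContinuousOn k (Ioc 0 T) := fun t ht =>
    (hk.hasDerivAt t ht).continuousAt.continuousWithinAt
  refine ((integrableOn_Ioc_rpow (by linarith : -1 < α - 1) T).const_mul M).mono'
    (hcont.aestronglyMeasurable measurableSet_Ioc) ?_
  exact (ae_restrict_iff' measurableSet_Ioc).2 (Eventually.of_forall hk.norm_le)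

theorem aestronglyMeasurable_deriv (hk : IsSingularKernel k k' T α M) [CompleteSpace F] :
    AEStronglyMeasurable k' (volume.restrict (Ioc 0 T)) :=
  (_root_.aestronglyMeasurable_deriv k _).congr <| (ae_restrict_iff' measurableSet_Ioc).2 <|
    Eventually.of_forall fun t ht => (hk.hasDerivAt t ht).deriv

theorem norm_deriv_apply_sub_le (hk : IsSingularKernel k k' T α M) (hz : HolderWith C η z) (t : ℝ)
    {u : ℝ} (hu : u ∈ Ioc 0 T) :
    ‖k' u (z (t - u) - z t)‖ ≤ M * C * u ^ (α - 2 + η) :=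
  calc ‖k' u (z (t - u) - z t)‖ ≤ M * u ^ (α - 2) * (C * u ^ (η : ℝ)) :=
        (k' u).le_of_opNorm_le_of_le (hk.norm_deriv_le u hu)
          (norm_sub_le_of_holderWith hz t hu.1.le)
    _ = M * C * u ^ (α - 2 + η) := by rw [Real.rpow_add hu.1]; ring

theorem ae_norm_deriv_apply_sub_le (hk : IsSingularKernel k k' T α M) (hz : HolderWith C η z)
    (t : ℝ) :
    ∀ᵐ u ∂volume.restrict (Ioc 0 T), ‖k' u (z (t - u) - z t)‖ ≤ M * C * u ^ (α - 2 + η) :=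
  (ae_restrict_iff' measurableSet_Ioc).2 (Eventually.of_forall fun _ hu =>
    hk.norm_deriv_apply_sub_le hz t hu)

theorem norm_marchaudDeriv_le (hk : IsSingularKernel k k' T α M) (hT : 0 ≤ T)
    (hz : HolderWith C η z) (hη : 1 - α < η) {B : ℝ} (hB : ∀ t, ‖z t‖ ≤ B) (t : ℝ) :
    ‖marchaudDeriv k k' T z t‖ ≤ ‖k T‖ * (B + B) + M * C * ∫ u in 0..T, u ^ (α - 2 + η) := by
  rw [marchaudDeriv, ← intervalIntegral.integral_const_mul, intervalIntegral.integral_of_le hT,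
    intervalIntegral.integral_of_le hT]
  refine norm_add_le_of_le ((k T).le_opNorm_of_le (norm_sub_le_of_le (hB _) (hB _))) ?_
  exact norm_integral_le_of_norm_le ((integrableOn_Ioc_rpow (by linarith) T).const_mul _)
    (hk.ae_norm_deriv_apply_sub_le hz t)

theorem tendsto_apply_sub_nhdsGT_zero (hk : IsSingularKernel k k' T α M) (hT : 0 < T) (hα : 0 < α)
    {W : ℝ → E} {B : ℝ≥0} (hWB : LipschitzWith B W) (t : ℝ) :
    Tendsto (fun u => k u (W (t - u) - W t)) (𝓝[>] 0) (𝓝 0) := by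
  have hbound : Tendsto (fun u : ℝ => M * B * u ^ α) (𝓝[>] 0) (𝓝 0) := by
    simpa [Real.zero_rpow hα.ne'] using
      ((Real.continuousAt_rpow_const 0 α (.inr hα.le)).tendsto.const_mul (M * B)).mono_left
        nhdsWithin_le_nhds
  refine squeeze_zero_norm' ?_ hbound
  filter_upwards [Ioc_mem_nhdsGT hT] with u hu
  calc ‖k u (W (t - u) - W t)‖ ≤ M * u ^ (α - 1) * (B * u ^ ((1 : ℝ≥0) : ℝ)) :=
        (k u).le_of_opNorm_le_of_le (hk.norm_le u hu)
          (norm_sub_le_of_holderWith hWB.holderWith t hu.1.le)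
    _ = M * B * u ^ α := by
        rw [Real.rpow_sub hu.1, NNReal.coe_one, Real.rpow_one]
        field_simp [hu.1.ne']

variable [CompleteSpace F]

theorem aestronglyMeasurable_deriv_apply_sub (hk : IsSingularKernel k k' T α M) (hz : Continuous z)
    (t : ℝ) :
    AEStronglyMeasurable (fun u => k' u (z (t - u) - z t)) (volume.restrict (Ioc 0 T)) :=
  (ContinuousLinearMap.id ℝ (E →L[ℝ] F)).aestronglyMeasurable_comp₂ hk.aestronglyMeasurable_deriv
    (by fun_prop : Continuous fun u => z (t - u) - z t).aestronglyMeasurable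

theorem integrableOn_deriv_apply_sub (hk : IsSingularKernel k k' T α M) (hzc : Continuous z)
    (hz : HolderWith C η z) (hη : 1 - α < η) (t : ℝ) :
    IntegrableOn (fun u => k' u (z (t - u) - z t)) (Ioc 0 T) :=
  Integrable.mono' ((integrableOn_Ioc_rpow (by linarith) T).const_mul _)
    (hk.aestronglyMeasurable_deriv_apply_sub hzc t) (hk.ae_norm_deriv_apply_sub_le hz t)

theorem continuous_marchaudDeriv (hk : IsSingularKernel k k' T α M) (hT : 0 ≤ T)
    (hzc : Continuous z) (hz : HolderWith C η z) (hη : 1 - α < η) :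
    Continuous (marchaudDeriv k k' T z) := by
  refine ((k T).continuous.comp (by fun_prop)).add ?_
  simp only [intervalIntegral.integral_of_le hT]
  refine continuous_of_dominated (hk.aestronglyMeasurable_deriv_apply_sub hzc)
    (hk.ae_norm_deriv_apply_sub_le hz)
    ((integrableOn_Ioc_rpow (by linarith) T).const_mul _) (Eventually.of_forall fun u => ?_)
  exact (k' u).continuous.comp (by fun_prop)

theorem isCausalPath_marchaudDeriv (hk : IsSingularKernel k k' T α M) (hT : 0 ≤ T)
    (hz : IsCausalPath z) (hzC : HolderWith C η z) (hη : 1 - α < η) :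
    IsCausalPath (marchaudDeriv k k' T z) where
  continuous := hk.continuous_marchaudDeriv hT hz.continuous hzC hη
  bddAbove_norm :=
    let ⟨_, hB⟩ := hz.bddAbove_norm
    ⟨_, forall_mem_range.2 (hk.norm_marchaudDeriv_le hT hzC hη (forall_mem_range.1 hB))⟩
  support_subset := by
    refine Function.support_subset_iff'.2 fun t ht => ?_
    have ht : t ≤ 0 := not_lt.1 ht
    rw [marchaudDeriv, hz.eq_zero_of_nonpos ht, hz.eq_zero_of_nonpos (by linarith : t - T ≤ 0),
      sub_zero, map_zero, zero_add, intervalIntegral.integral_of_le hT]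
    refine setIntegral_eq_zero_of_forall_eq_zero fun u hu => ?_
    rw [hz.eq_zero_of_nonpos (by linarith [hu.1]), sub_zero, map_zero]

theorem integral_deriv_apply_sub_past (hk : IsSingularKernel k k' T α M) (hz : IsCausalPath z)
    (hzC : HolderWith C η z) (hη : 1 - α < η) {t : ℝ} (ht : t ∈ Icc 0 T) :
    ∫ u in t..T, k' u (z (t - u) - z t) = k t (z t) - k T (z t) := by
  have hpast : ∀ u ∈ uIcc t T, k' u (z (t - u) - z t) = -k' u (z t) := fun u hu => by
    rw [uIcc_of_le ht.2] at hu
    rw [hz.eq_zero_of_nonpos (sub_nonpos.2 hu.1), zero_sub, map_neg]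
  rcases ht.1.eq_or_lt with rfl | ht₀
  · rw [intervalIntegral.integral_congr hpast]
    simp [hz.eq_zero_of_nonpos le_rfl]
  have hderiv : ∀ u ∈ uIcc t T,
      HasDerivAt (fun u => -k u (z t)) (k' u (z (t - u) - z t)) u := fun u hu => by
    rw [hpast u hu]
    rw [uIcc_of_le ht.2] at hu
    simpa using ((hk.hasDerivAt u ⟨ht₀.trans_le hu.1, hu.2⟩).clm_apply
      (hasDerivAt_const u (z t))).fun_neg
  rw [intervalIntegral.integral_eq_sub_of_hasDerivAt hderiv, sub_neg_eq_add, neg_add_eq_sub]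
  exact (intervalIntegrable_iff_integrableOn_Ioc_of_le ht.2).2
    ((hk.integrableOn_deriv_apply_sub hz.continuous hzC hη t).mono_set (Ioc_subset_Ioc_left ht.1))

theorem volterraGamma_eq_marchaudDeriv (hk : IsSingularKernel k k' T α M) (hz : IsCausalPath z)
    (hzC : HolderWith C η z) (hη : 1 - α < η) :
    EqOn (volterraGamma k k' z) (marchaudDeriv k k' T z) (Icc 0 T) := by
  intro t ht
  have hint : IntegrableOn (fun u => k' u (z (t - u) - z t)) (Ioc 0 T) :=
    hk.integrableOn_deriv_apply_sub hz.continuous hzC hη t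
  have hsplit : ∫ u in 0..T, k' u (z (t - u) - z t) =
      (∫ u in 0..t, k' u (z (t - u) - z t)) + (k t (z t) - k T (z t)) := by
    rw [← hk.integral_deriv_apply_sub_past hz hzC hη ht]
    refine (intervalIntegral.integral_add_adjacent_intervals ?_ ?_).symm
    · exact (intervalIntegrable_iff_integrableOn_Ioc_of_le ht.1).2
        (hint.mono_set (Ioc_subset_Ioc_right ht.2))
    · exact (intervalIntegrable_iff_integrableOn_Ioc_of_le ht.2).2
        (hint.mono_set (Ioc_subset_Ioc_left ht.1))
  have hreverse : ∫ s in 0..t, k' (t - s) (z s - z t) = ∫ u in 0..t, k' u (z (t - u) - z t) := by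
    simpa using intervalIntegral.integral_comp_sub_left (a := 0) (b := t)
      (fun u => k' u (z (t - u) - z t)) t
  rw [marchaudDeriv, hz.eq_zero_of_nonpos (sub_nonpos.2 ht.2), sub_zero, hsplit, volterraGamma,
    hreverse]
  abel

theorem hasDerivAt_marchaudDeriv (hk : IsSingularKernel k k' T α M) (hT : 0 ≤ T) (hα : 0 < α)
    {W : ℝ → E} {B : ℝ≥0} (hW : ∀ t, HasDerivAt W (z t) t) (hWB : LipschitzWith B W)
    (hzc : Continuous z) (hz : HolderWith C η z) (hη : 1 - α < η) (t : ℝ) :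
    HasDerivAt (marchaudDeriv k k' T W) (marchaudDeriv k k' T z t) t := by
  refine .add ?_ ?_
  · exact (k T).hasFDerivAt.comp_hasDerivAt t ((hW t).sub ((hW (t - T)).comp_sub_const t T))
  simp only [intervalIntegral.integral_of_le hT]
  refine (hasDerivAt_integral_of_dominated_loc_of_deriv_le
    (F := fun t u => k' u (W (t - u) - W t)) (F' := fun t u => k' u (z (t - u) - z t)) univ_mem
    (Eventually.of_forall (hk.aestronglyMeasurable_deriv_apply_sub hWB.continuous))
    (hk.integrableOn_deriv_apply_sub hWB.continuous hWB.holderWith (by simpa using hα) t)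
    (hk.aestronglyMeasurable_deriv_apply_sub hzc t) ?_
    ((integrableOn_Ioc_rpow (by linarith : -1 < α - 2 + η) T).const_mul (M * C))
    (Eventually.of_forall fun u x _ => ?_)).2
  · refine (ae_restrict_iff' measurableSet_Ioc).2 (Eventually.of_forall fun u hu x _ => ?_)
    exact hk.norm_deriv_apply_sub_le hz x hu
  · exact (k' u).hasFDerivAt.comp_hasDerivAt x (((hW (x - u)).comp_sub_const x u).sub (hW x))

theorem integral_apply_comp_sub_eq_marchaudDeriv (hk : IsSingularKernel k k' T α M) (hT : 0 < T)
    (hα : 0 < α) {W : ℝ → E} {B : ℝ≥0} (hW : ∀ t, HasDerivAt W (z t) t) (hWB : LipschitzWith B W)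
    (hzc : Continuous z) (t : ℝ) :
    ∫ u in 0..T, k u (z (t - u)) = marchaudDeriv k k' T W t := by
  have hint : IntervalIntegrable (fun u => k u (z (t - u))) volume 0 T := by
    refine (intervalIntegrable_iff_integrableOn_Ioc_of_le hT.le).2 ?_
    refine (ContinuousLinearMap.id ℝ (E →L[ℝ] F)).integrable_of_bilin_of_bdd_right B
      (hk.integrableOn hα) (by fun_prop : Continuous fun u => z (t - u)).aestronglyMeasurable ?_
    exact Eventually.of_forall fun u => (hW (t - u)).le_of_lipschitz hWB
  have hint' : IntervalIntegrable (fun u => k' u (W (t - u) - W t)) volume 0 T :=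
    (intervalIntegrable_iff_integrableOn_Ioc_of_le hT.le).2
      (hk.integrableOn_deriv_apply_sub hWB.continuous hWB.holderWith (by simpa using hα) t)
  have hderiv : ∀ u ∈ Ioc 0 T, HasDerivAt (fun u => k u (W (t - u) - W t))
      (k' u (W (t - u) - W t) - k u (z (t - u))) u := fun u hu => by
    simpa [sub_eq_add_neg] using (hk.hasDerivAt u hu).clm_apply
      (((hW (t - u)).comp_const_sub t u).sub_const (W t))
  have hFTC := intervalIntegral.integral_eq_sub_of_hasDerivAt_of_tendsto hT
    (fun u hu => hderiv u (Ioo_subset_Ioc_self hu)) (hint'.sub hint)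
    (hk.tendsto_apply_sub_nhdsGT_zero hT hα hWB t)
    ((hderiv T ⟨hT, le_rfl⟩).continuousAt.tendsto.mono_left nhdsWithin_le_nhds)
  rw [intervalIntegral.integral_sub hint' hint, sub_zero, sub_eq_iff_eq_add] at hFTC
  rw [marchaudDeriv, hFTC, ← add_assoc, ← map_add]
  simp

theorem hasDerivAt_convolution (hk : IsSingularKernel k k' T α M) (hT : 0 < T) (hα : 0 < α)
    [CompleteSpace E] (hz : IsCausalPath z) (hzC : HolderWith C η z) (hη : 1 - α < η) (t : ℝ) :
    HasDerivAt ((Ioc 0 T).indicator k ⋆ᵥ z)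
      (marchaudDeriv k k' T z t) t := by
  obtain ⟨B, hB⟩ := hz.bddAbove_norm
  have hW : ∀ t, HasDerivAt (fun t => ∫ s in 0..t, z s) (z t) t := fun t =>
    (hz.continuous.integral_hasStrictDerivAt 0 t).hasDerivAt
  have hWB : LipschitzWith B.toNNReal fun t => ∫ s in 0..t, z s :=
    lipschitzWith_of_nnnorm_deriv_le (fun t => (hW t).differentiableAt) fun t => by
      rw [(hW t).deriv, ← norm_toNNReal]
      exact Real.toNNReal_le_toNNReal (hB (mem_range_self t))
  have heq : (Ioc 0 T).indicator k ⋆ᵥ z =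
      marchaudDeriv k k' T fun t => ∫ s in 0..t, z s := by
    ext t
    rw [← hk.integral_apply_comp_sub_eq_marchaudDeriv hT hα hW hWB hz.continuous,
      intervalIntegral.integral_of_le hT.le, ← integral_indicator measurableSet_Ioc]
    refine integral_congr_ae (Eventually.of_forall fun u => ?_)
    by_cases hu : u ∈ Ioc 0 T <;> simp [hu]
  rw [heq]
  exact hk.hasDerivAt_marchaudDeriv hT.le hα hW hWB hz.continuous hzC hη t

end IsSingularKernel

end SingularKernel

/-! ### The transformation Γ on Hölder paths -/

section PathExtension

theorem eqOn_IccExtend {X : Type*} {a b : ℝ} (hab : a ≤ b) (z : ℝ → X) :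
    EqOn z (IccExtend hab fun t => z t) (Icc a b) :=
  fun _ ht => (IccExtend_of_mem hab (fun t => z t) ht).symm

variable {E : Type*} [NormedAddCommGroup E] {T : ℝ} {C η : ℝ≥0} {z : ℝ → E}

theorem isCausalPath_IccExtend (hT : 0 ≤ T) (hz : ContinuousOn z (Icc 0 T)) (hz0 : z 0 = 0) :
    IsCausalPath (IccExtend hT fun t => z t) where
  continuous := (continuousOn_iff_continuous_domRestrict.1 hz).Icc_extend'
  bddAbove_norm := by
    refine (isCompact_Icc.image_of_continuousOn hz.norm).bddAbove.mono ?_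
    exact range_subset_iff.2 fun t => mem_image_of_mem _ (projIcc 0 T hT t).2
  support_subset := Function.support_subset_iff'.2 fun t ht => by
    rw [IccExtend_of_le_left hT _ (not_lt.1 ht), hz0]

theorem holderWith_IccExtend {a b : ℝ} (hab : a ≤ b) (hz : HolderOnWith C η z (Icc a b)) :
    HolderWith C η (IccExtend hab fun t => z t) := by
  simpa using! hz.comp_holderWith
    ((LipschitzWith.subtype_val _).comp (LipschitzWith.projIcc hab)).holderWith
    fun t => (projIcc a b hab t).2

end PathExtension

section Operator

variable {E F : Type*} [NormedAddCommGroup E] [NormedSpace ℝ E] [NormedAddCommGroup F]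
  [NormedSpace ℝ F] {k k' : ℝ → E →L[ℝ] F} {T α M : ℝ} {C η : ℝ≥0}

theorem volterraGamma_congr {z w : ℝ → E} (h : EqOn z w (Icc 0 T)) :
    EqOn (volterraGamma k k' z) (volterraGamma k k' w) (Icc 0 T) := by
  intro t ht
  rw [volterraGamma, volterraGamma, h ht]
  congr 1
  refine intervalIntegral.integral_congr fun s hs => ?_
  rw [uIcc_of_le ht.1] at hs
  simp only [h ⟨hs.1, hs.2.trans ht.2⟩]

theorem volterraGamma_smul (c : ℝ) (z : ℝ → E) (t : ℝ) :
    volterraGamma k k' (c • z) t = c • volterraGamma k k' z t := by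
  simp only [volterraGamma, Pi.smul_apply, ← smul_sub, map_smul, intervalIntegral.integral_smul,
    smul_add]

namespace IsSingularKernel

theorem norm_volterraGamma_le (hk : IsSingularKernel k k' T α M) (hT : 0 ≤ T) (hη0 : 0 < η)
    (hη : 1 - α < η) [CompleteSpace F] {z : ℝ → E} (hz : HolderOnWith C η z (Icc 0 T))
    (hz0 : z 0 = 0) {B t : ℝ} (hB : ∀ s ∈ Icc 0 T, ‖z s‖ ≤ B) (ht : t ∈ Icc 0 T) :
    ‖volterraGamma k k' z t‖ ≤ ‖k T‖ * (B + B) + M * C * ∫ u in 0..T, u ^ (α - 2 + η) := by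
  rw [volterraGamma_congr (eqOn_IccExtend hT z) ht, hk.volterraGamma_eq_marchaudDeriv
    (isCausalPath_IccExtend hT (hz.continuousOn hη0) hz0) (holderWith_IccExtend hT hz) hη ht]
  exact hk.norm_marchaudDeriv_le hT (holderWith_IccExtend hT hz) hη
    (fun s => hB _ (projIcc 0 T hT s).2) t

theorem exists_norm_volterraGamma_le (hk : IsSingularKernel k k' T α M)
    (hT : 0 ≤ T) (hη0 : 0 < η) (hη : 1 - α < η) [CompleteSpace F] :
    ∃ N, 0 ≤ N ∧ ∀ (C : ℝ≥0) (z : ℝ → E), z 0 = 0 → (∀ t ∈ Icc 0 T, ‖z t‖ ≤ C) →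
      HolderOnWith C η z (Icc 0 T) → ∀ t ∈ Icc 0 T, ‖volterraGamma k k' z t‖ ≤ N * C := by
  refine ⟨|2 * ‖k T‖ + M * ∫ u in 0..T, u ^ (α - 2 + η)|, abs_nonneg _,
    fun C z hz0 hzC hz t ht => ?_⟩
  calc ‖volterraGamma k k' z t‖
    _ ≤ ‖k T‖ * (C + C) + M * C * ∫ u in 0..T, u ^ (α - 2 + η) :=
      hk.norm_volterraGamma_le hT hη0 hη hz hz0 hzC ht
    _ = (2 * ‖k T‖ + M * ∫ u in 0..T, u ^ (α - 2 + η)) * C := by ring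
    _ ≤ |2 * ‖k T‖ + M * ∫ u in 0..T, u ^ (α - 2 + η)| * C := by
      gcongr
      exact le_abs_self _

theorem continuousOn_volterraGamma (hk : IsSingularKernel k k' T α M) (hT : 0 ≤ T) (hη0 : 0 < η)
    (hη : 1 - α < η) [CompleteSpace F] {z : ℝ → E} (hz : HolderOnWith C η z (Icc 0 T))
    (hz0 : z 0 = 0) : ContinuousOn (volterraGamma k k' z) (Icc 0 T) := by
  have hw := isCausalPath_IccExtend hT (hz.continuousOn hη0) hz0
  have hwC := holderWith_IccExtend hT hz
  exact (hk.continuous_marchaudDeriv hT hw.continuous hwC hη).continuousOn.congr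
    ((volterraGamma_congr (eqOn_IccExtend hT z)).trans
      (hk.volterraGamma_eq_marchaudDeriv hw hwC hη))

theorem intervalIntegrable_deriv_apply_sub (hk : IsSingularKernel k k' T α M) (hT : 0 ≤ T)
    (hη0 : 0 < η) (hη : 1 - α < η) [CompleteSpace F] {z : ℝ → E}
    (hz : HolderOnWith C η z (Icc 0 T)) {t : ℝ} (ht : t ∈ Icc 0 T) :
    IntervalIntegrable (fun s => k' (t - s) (z s - z t)) volume 0 t := by
  have hz_ext := eqOn_IccExtend hT z
  have hwC := holderWith_IccExtend hT hz
  have hint := (intervalIntegrable_iff_integrableOn_Ioc_of_le ht.1).2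
    ((hk.integrableOn_deriv_apply_sub (hwC.continuous hη0) hwC hη t).mono_set
      (Ioc_subset_Ioc_right ht.2))
  have hint' := (hint.comp_sub_left t).symm
  simp only [sub_zero, sub_self, sub_sub_cancel] at hint'
  refine hint'.congr fun s hs => ?_
  rw [uIoc_of_le ht.1] at hs
  simp only [hz_ext ht, hz_ext ⟨hs.1.le, hs.2.trans ht.2⟩]

theorem volterraGamma_add (hk : IsSingularKernel k k' T α M) (hT : 0 ≤ T)
    (hη0 : 0 < η) (hη : 1 - α < η) [CompleteSpace F] {C' : ℝ≥0} {z w : ℝ → E}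
    (hz : HolderOnWith C η z (Icc 0 T)) (hw : HolderOnWith C' η w (Icc 0 T)) {t : ℝ}
    (ht : t ∈ Icc 0 T) :
    volterraGamma k k' (z + w) t = volterraGamma k k' z t + volterraGamma k k' w t := by
  simp only [volterraGamma, Pi.add_apply, add_sub_add_comm, map_add]
  rw [intervalIntegral.integral_add (hk.intervalIntegrable_deriv_apply_sub hT hη0 hη hz ht)
    (hk.intervalIntegrable_deriv_apply_sub hT hη0 hη hw ht), add_add_add_comm]

theorem intervalIntegrable_norm_apply (hk : IsSingularKernel k k' T α M) (hT : 0 ≤ T) (hα : 0 < α)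
    {z : ℝ → E} (hz : ContinuousOn z (Icc 0 T)) :
    IntervalIntegrable (fun t => ‖k t (z t)‖) volume 0 T := by
  refine (intervalIntegrable_iff_integrableOn_Ioc_of_le hT).2 (Integrable.norm ?_)
  obtain ⟨B, hB⟩ := isCompact_Icc.exists_bound_of_continuousOn hz
  refine (ContinuousLinearMap.id ℝ (E →L[ℝ] F)).integrable_of_bilin_of_bdd_right B
    (hk.integrableOn hα)
    ((hz.mono Ioc_subset_Icc_self).aestronglyMeasurable measurableSet_Ioc) ?_
  filter_upwards [self_mem_ae_restrict measurableSet_Ioc] with t ht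
  exact hB t (Ioc_subset_Icc_self ht)

theorem integrable_prod_deriv_apply_sub (hk : IsSingularKernel k k' T α M) [CompleteSpace F]
    {z : ℝ → E} (hzc : Continuous z) (hz : HolderWith C η z) (hη : 1 - α < η) :
    Integrable (fun p : ℝ × ℝ => k' p.2 (z (p.1 - p.2) - z p.1))
      ((volume.restrict (Ioc 0 T)).prod (volume.restrict (Ioc 0 T))) := by
  refine .mono' (((integrableOn_Ioc_rpow (by linarith : -1 < α - 2 + η) T).const_mul
    (M * C)).comp_snd _) ?_ ?_
  · exact (ContinuousLinearMap.id ℝ (E →L[ℝ] F)).aestronglyMeasurable_comp₂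
      hk.aestronglyMeasurable_deriv.comp_snd
      (by fun_prop : Continuous fun p : ℝ × ℝ => z (p.1 - p.2) - z p.1).aestronglyMeasurable
  · rw [Measure.prod_restrict]
    filter_upwards [self_mem_ae_restrict (measurableSet_Ioc.prod measurableSet_Ioc)] with p hp
    exact hk.norm_deriv_apply_sub_le hz p.1 hp.2

theorem intervalIntegrable_integral_norm_deriv_apply_sub (hk : IsSingularKernel k k' T α M)
    (hT : 0 ≤ T) (hη0 : 0 < η) (hη : 1 - α < η) [CompleteSpace F] {z : ℝ → E}
    (hz : HolderOnWith C η z (Icc 0 T)) :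
    IntervalIntegrable (fun t => ∫ s in 0..t, ‖k' (t - s) (z s - z t)‖) volume 0 T := by
  have hwC := holderWith_IccExtend hT hz
  have hz_ext := eqOn_IccExtend hT z
  set w : ℝ → E := IccExtend hT fun t => z t
  rw [intervalIntegrable_iff_integrableOn_Ioc_of_le hT]
  refine ((hk.integrable_prod_deriv_apply_sub (hwC.continuous hη0) hwC hη).norm.indicator
    (measurableSet_le measurable_snd measurable_fst)).integral_prod_left.congr ?_
  filter_upwards [self_mem_ae_restrict measurableSet_Ioc] with t ht
  calc ∫ u in Ioc 0 T, {p : ℝ × ℝ | p.2 ≤ p.1}.indicator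
        (fun p => ‖k' p.2 (w (p.1 - p.2) - w p.1)‖) (t, u)
      = ∫ u in Ioc 0 T, (Iic t).indicator (fun u => ‖k' u (w (t - u) - w t)‖) u := rfl
    _ = ∫ u in 0..t, ‖k' u (w (t - u) - w t)‖ := by
      rw [setIntegral_indicator measurableSet_Iic, Ioc_inter_Iic, min_eq_right ht.2,
        intervalIntegral.integral_of_le ht.1.le]
    _ = ∫ s in 0..t, ‖k' (t - s) (w s - w t)‖ := by
      simpa using (intervalIntegral.integral_comp_sub_left (a := 0) (b := t)
        (fun u => ‖k' u (w (t - u) - w t)‖) t).symm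
    _ = ∫ s in 0..t, ‖k' (t - s) (z s - z t)‖ := by
      refine intervalIntegral.integral_congr fun s hs => ?_
      rw [uIcc_of_le ht.1.le] at hs
      simp only [hz_ext (Ioc_subset_Icc_self ht), hz_ext ⟨hs.1, hs.2.trans ht.2⟩]

end IsSingularKernel

end Operator

/-! ### Resolvents and inversion -/

section Resolvent

variable {E F : Type*} [NormedAddCommGroup E] [NormedSpace ℝ E] [NormedAddCommGroup F]
  [NormedSpace ℝ F]

/-- The transformation `Z` of the measure `A δ₀ + ℓ(t) dt`. -/
def volterraZ (A : F →L[ℝ] E) (ℓ : ℝ → F →L[ℝ] E) (x : ℝ → F) (t : ℝ) : E :=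
  A (x t - x 0) + ∫ s in 0..t, ℓ s (x (t - s) - x 0)

/-- The operator-valued measure `A δ₀ + ℓ(t) dt` is a resolvent of the first kind of the kernel `k`
up to time `T`: its convolutions with `k` from either side are the identity. -/
structure IsVolterraResolvent (k : ℝ → E →L[ℝ] F) (A : F →L[ℝ] E) (ℓ : ℝ → F →L[ℝ] E) (T : ℝ) :
    Prop where
  integrableOn : IntegrableOn ℓ (Ioc 0 T)
  right_inv : ∀ᵐ t ∂volume.restrict (Ioc 0 T),
    k t ∘L A + ∫ s in 0..t, k (t - s) ∘L ℓ s = ContinuousLinearMap.id ℝ F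
  left_inv : ∀ᵐ t ∂volume.restrict (Ioc 0 T),
    A ∘L k t + ∫ s in 0..t, ℓ s ∘L k (t - s) = ContinuousLinearMap.id ℝ E

variable {k : ℝ → E →L[ℝ] F} {A : F →L[ℝ] E} {ℓ : ℝ → F →L[ℝ] E} {T : ℝ}

namespace IsVolterraResolvent

theorem ae_kernel_comp_add_convolution_eq_id (hr : IsVolterraResolvent k A ℓ T) :
    ∀ᵐ t ∂volume.restrict (Ioc 0 T), ((fun s => (Ioc 0 T).indicator k s ∘L A) +
      (Ioc 0 T).indicator k ⋆ₒ (Ioc 0 T).indicator ℓ) t = .id ℝ F := by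
  filter_upwards [hr.right_inv, self_mem_ae_restrict measurableSet_Ioc] with t hrt ht
  rw [Pi.add_apply, indicator_of_mem ht, ← convolution_flip,
    indicator_convolution_indicator_eq_intervalIntegral _ ℓ k (Ioc_subset_Icc_self ht)]
  exact hrt

theorem ae_comp_kernel_add_convolution_eq_id (hr : IsVolterraResolvent k A ℓ T) :
    ∀ᵐ t ∂volume.restrict (Ioc 0 T), ((fun s => A ∘L (Ioc 0 T).indicator k s) +
      (Ioc 0 T).indicator ℓ ⋆ₒ (Ioc 0 T).indicator k) t = .id ℝ E := by
  filter_upwards [hr.left_inv, self_mem_ae_restrict measurableSet_Ioc] with t hrt ht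
  rw [Pi.add_apply, indicator_of_mem ht,
    indicator_convolution_indicator_eq_intervalIntegral _ ℓ k (Ioc_subset_Icc_self ht)]
  exact hrt

variable [CompleteSpace E] [CompleteSpace F]

theorem convolution_clm_apply_add_convolution_eq_integral (hr : IsVolterraResolvent k A ℓ T)
    (hk : IntegrableOn k (Ioc 0 T)) {y : ℝ → F} (hy : IsCausalPath y) {t : ℝ} (ht : t ∈ Icc 0 T) :
    ((Ioc 0 T).indicator k ⋆ᵥ fun s => A (y s) + ((Ioc 0 T).indicator ℓ ⋆ᵥ y) s) t =
      ∫ s in 0..t, y s := by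
  have hκ := integrable_indicator_Ioc hk
  have hL := integrable_indicator_Ioc hr.integrableOn
  rw [convolution_clm_apply_add_convolution A hκ hL hy.continuous hy.bddAbove_norm]
  refine convolution_eq_intervalIntegral_of_ae_eq_id ?_ hr.ae_kernel_comp_add_convolution_eq_id
    hy.support_subset ht
  refine (Function.support_add _ _).trans (union_subset ?_ ?_)
  · exact (support_indicator_Ioc_subset_Ioi k T).trans' fun t ht h => ht (by simp [h])
  · exact support_convolution_subset_Ioi _ (support_indicator_Ioc_subset_Ioi k T)
      (support_indicator_Ioc_subset_Ioi ℓ T)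

theorem clm_apply_convolution_add_convolution_eq_integral (hr : IsVolterraResolvent k A ℓ T)
    (hk : IntegrableOn k (Ioc 0 T)) {y : ℝ → E} (hy : IsCausalPath y) {t : ℝ} (ht : t ∈ Icc 0 T) :
    A (((Ioc 0 T).indicator k ⋆ᵥ y) t) +
        ((Ioc 0 T).indicator ℓ ⋆ᵥ ((Ioc 0 T).indicator k ⋆ᵥ y)) t = ∫ s in 0..t, y s := by
  have hκ := integrable_indicator_Ioc hk
  have hL := integrable_indicator_Ioc hr.integrableOn
  refine (congr_fun (clm_apply_convolution_add_convolution A hκ hL hy.continuous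
    hy.bddAbove_norm) t).trans ?_
  refine convolution_eq_intervalIntegral_of_ae_eq_id ?_ hr.ae_comp_kernel_add_convolution_eq_id
    hy.support_subset ht
  refine (Function.support_add _ _).trans (union_subset ?_ ?_)
  · exact (support_indicator_Ioc_subset_Ioi k T).trans' fun t ht h => ht (by simp [h])
  · exact support_convolution_subset_Ioi _ (support_indicator_Ioc_subset_Ioi ℓ T)
      (support_indicator_Ioc_subset_Ioi k T)

end IsVolterraResolvent

end Resolvent

section Inverse

variable {E F : Type*} [NormedAddCommGroup E] [NormedSpace ℝ E] [NormedAddCommGroup F]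
  [NormedSpace ℝ F] {k k' : ℝ → E →L[ℝ] F} {A : F →L[ℝ] E} {ℓ : ℝ → F →L[ℝ] E} {T α M : ℝ}
  {C η : ℝ≥0}

theorem volterraZ_congr {x y : ℝ → F} (h : EqOn x y (Icc 0 T)) :
    EqOn (volterraZ A ℓ x) (volterraZ A ℓ y) (Icc 0 T) := by
  intro t ht
  rw [volterraZ, volterraZ, h ht, h ⟨le_rfl, ht.1.trans ht.2⟩]
  congr 1
  refine intervalIntegral.integral_congr fun s hs => ?_
  rw [uIcc_of_le ht.1] at hs
  simp only [h ⟨sub_nonneg.2 hs.2, (sub_le_self t hs.1).trans ht.2⟩]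

theorem volterraZ_eq_clm_apply_add_convolution {y : ℝ → F} (hy : IsCausalPath y) {t : ℝ}
    (ht : t ∈ Icc 0 T) :
    volterraZ A ℓ y t = A (y t) + ((Ioc 0 T).indicator ℓ ⋆ᵥ y) t := by
  rw [volterraZ, hy.eq_zero_of_nonpos le_rfl,
    convolution_eq_intervalIntegral_of_eqOn_Ioo _ (support_indicator_Ioc_subset_Ioi ℓ T)
      hy.support_subset ht.1 (eqOn_indicator_Ioc_Ioo ℓ ht.2) (eqOn_refl y _)]
  simp

variable [CompleteSpace E] [CompleteSpace F]

theorem volterraGamma_eqOn_of_eqOn_volterraZ (hT : 0 < T) (hk : IsSingularKernel k k' T α M)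
    (hα : 0 < α) (hr : IsVolterraResolvent k A ℓ T) (hη : 1 - α < η) {y : ℝ → F} {z : ℝ → E}
    (hy : IsCausalPath y) (hz : IsCausalPath z) (hzC : HolderWith C η z)
    (hzy : EqOn z (volterraZ A ℓ y) (Icc 0 T)) : EqOn (volterraGamma k k' z) y (Icc 0 T) := by
  intro t ht
  have hZ : EqOn (fun t => A (y t) + ((Ioc 0 T).indicator ℓ ⋆ᵥ y) t) z (Icc 0 T) := fun t ht => by
    rw [hzy ht, volterraZ_eq_clm_apply_add_convolution hy ht]
  have hZ0 : support (fun t => A (y t) + ((Ioc 0 T).indicator ℓ ⋆ᵥ y) t) ⊆ Ioi 0 := by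
    refine (Function.support_add _ _).trans (union_subset ?_ ?_)
    · exact (Function.support_comp_subset A.map_zero y).trans hy.support_subset
    · exact support_convolution_subset_Ioi _ (support_indicator_Ioc_subset_Ioi ℓ T)
        hy.support_subset
  have hprimitive : EqOn ((Ioc 0 T).indicator k ⋆ᵥ z) (fun t => ∫ s in 0..t, y s) (Icc 0 T) := by
    intro t ht
    have hκ := support_indicator_Ioc_subset_Ioi k T
    refine .trans ?_
      (hr.convolution_clm_apply_add_convolution_eq_integral (hk.integrableOn hα) hy ht)
    rw [convolution_eq_intervalIntegral_of_eqOn_Ioo _ hκ hz.support_subset ht.1 (eqOn_refl _ _)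
        (eqOn_refl z _),
      convolution_eq_intervalIntegral_of_eqOn_Ioo _ hκ hZ0 ht.1 (eqOn_refl _ _)
        (hZ.mono (Ioo_subset_Icc_self.trans (Icc_subset_Icc_right ht.2)))]
  have hderiv : HasDerivAt (fun t => ∫ s in 0..t, y s) (y t) t :=
    (hy.continuous.integral_hasStrictDerivAt 0 t).hasDerivAt
  rw [hk.volterraGamma_eq_marchaudDeriv hz hzC hη ht]
  exact (uniqueDiffOn_Icc hT t ht).eq_deriv _
    (hk.hasDerivAt_convolution hT hα hz hzC hη t).hasDerivWithinAt
    (hderiv.hasDerivWithinAt.congr hprimitive (hprimitive ht))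

theorem volterraGamma_volterraZ (hT : 0 < T) (hk : IsSingularKernel k k' T α M) (hα : 0 < α)
    (hr : IsVolterraResolvent k A ℓ T) (hη0 : 0 < η) (hη : 1 - α < η) {x : ℝ → F}
    (hx : ContinuousOn x (Icc 0 T)) (hz : HolderOnWith C η (volterraZ A ℓ x) (Icc 0 T)) :
    EqOn (volterraGamma k k' (volterraZ A ℓ x)) (fun t => x t - x 0) (Icc 0 T) := by
  have hxy := eqOn_IccExtend hT.le fun t => x t - x 0
  have hz_ext := eqOn_IccExtend hT.le (volterraZ A ℓ x)
  have hZ : volterraZ A ℓ (fun t => x t - x 0) = volterraZ A ℓ x := by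
    ext t
    simp [volterraZ]
  refine (volterraGamma_congr hz_ext).trans (.trans ?_ hxy.symm)
  refine volterraGamma_eqOn_of_eqOn_volterraZ hT hk hα hr hη
    (isCausalPath_IccExtend hT.le (hx.sub continuousOn_const) (sub_self _))
    (isCausalPath_IccExtend hT.le (hz.continuousOn hη0) (by simp [volterraZ]))
    (holderWith_IccExtend hT.le hz) (hz_ext.symm.trans ?_)
  rw [← hZ]
  exact volterraZ_congr hxy

theorem volterraZ_volterraGamma (hT : 0 < T) (hk : IsSingularKernel k k' T α M) (hα : 0 < α)
    (hr : IsVolterraResolvent k A ℓ T) (hη0 : 0 < η) (hη : 1 - α < η) {z : ℝ → E} (hz0 : z 0 = 0)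
    (hz : HolderOnWith C η z (Icc 0 T)) :
    EqOn (volterraZ A ℓ (volterraGamma k k' z)) z (Icc 0 T) := by
  intro t ht
  set w : ℝ → E := IccExtend hT.le fun t => z t
  have hzw : EqOn z w (Icc 0 T) := eqOn_IccExtend hT.le z
  have hw : IsCausalPath w := isCausalPath_IccExtend hT.le (hz.continuousOn hη0) hz0
  have hwC : HolderWith C η w := holderWith_IccExtend hT.le hz
  have hΓ : IsCausalPath (marchaudDeriv k k' T w) := hk.isCausalPath_marchaudDeriv hT.le hw hwC hη
  have hconv := hw.convolution (.id ℝ _) (integrable_indicator_Ioc (hk.integrableOn hα))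
    (support_indicator_Ioc_subset_Ioi k T)
  have hderiv := hk.hasDerivAt_convolution hT hα hw hwC hη
  have hZ : HasDerivAt (fun t => A (((Ioc 0 T).indicator k ⋆ᵥ w) t) +
      ((Ioc 0 T).indicator ℓ ⋆ᵥ ((Ioc 0 T).indicator k ⋆ᵥ w)) t)
      (volterraZ A ℓ (marchaudDeriv k k' T w) t) t := by
    rw [volterraZ_eq_clm_apply_add_convolution hΓ ht]
    exact (A.hasFDerivAt.comp_hasDerivAt t (hderiv t)).add
      (hasDerivAt_convolution_right_of_bddAbove_norm _ (integrable_indicator_Ioc hr.integrableOn)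
        hconv.bddAbove_norm hderiv hΓ.continuous hΓ.bddAbove_norm t)
  have hprimitive := fun t (ht : t ∈ Icc 0 T) =>
    hr.clm_apply_convolution_add_convolution_eq_integral (hk.integrableOn hα) hw ht
  rw [volterraZ_congr ((volterraGamma_congr hzw).trans
    (hk.volterraGamma_eq_marchaudDeriv hw hwC hη)) ht, hzw ht]
  exact (uniqueDiffOn_Icc hT t ht).eq_deriv _ hZ.hasDerivWithinAt
    ((hw.continuous.integral_hasStrictDerivAt 0 t).hasDerivAt.hasDerivWithinAt.congr hprimitive
      (hprimitive t ht))

end Inverse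

/-! ### Matrix kernels -/

section Matrix

/-- Matrices identified with operators through matrix-vector multiplication, which turns matrix
kernels into operator-valued ones. -/
def mulVecCLM {m n : Type*} [Fintype n] [DecidableEq n] :
    Matrix m n ℝ ≃ₗ[ℝ] (n → ℝ) →L[ℝ] (m → ℝ) :=
  Matrix.toLin'.trans LinearMap.toContinuousLinearMap

theorem mulVecCLM_eq_sum {m n : Type*} [Fintype m] [Fintype n] [DecidableEq m] [DecidableEq n]
    (P : Matrix m n ℝ) : mulVecCLM P = ∑ i, ∑ j, P i j • mulVecCLM (Matrix.single i j 1) := by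
  conv_lhs => rw [matrix_eq_sum_single P]
  simp only [map_sum, ← map_smul, smul_single, smul_eq_mul, mul_one]

theorem hasDerivAt_mulVecCLM {m n : Type*} [Finite m] [Fintype n] [DecidableEq n]
    {N : ℝ → Matrix m n ℝ} {N' : Matrix m n ℝ} {t : ℝ}
    (hN : ∀ i j, HasDerivAt (fun s => N s i j) (N' i j) t) :
    HasDerivAt (fun s => mulVecCLM (N s)) (mulVecCLM N') t := by
  classical
  cases nonempty_fintype m
  simpa only [← mulVecCLM_eq_sum] using
    HasDerivAt.fun_sum fun i (_ : i ∈ Finset.univ) => HasDerivAt.fun_sum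
      fun j (_ : j ∈ Finset.univ) => (hN i j).smul_const (mulVecCLM (Matrix.single i j 1))

theorem integrable_mulVecCLM {X m n : Type*} [MeasurableSpace X] {μ : Measure X} [Fintype m]
    [Fintype n] [DecidableEq n] {N : X → Matrix m n ℝ}
    (hN : ∀ i j, Integrable (fun x => N x i j) μ) :
    Integrable (fun x => mulVecCLM (N x)) μ := by
  classical
  simpa only [← mulVecCLM_eq_sum] using
    integrable_finsetSum Finset.univ fun i _ => integrable_finsetSum Finset.univ
      fun j _ => (hN i j).smul_const (mulVecCLM (Matrix.single i j 1))

theorem mulVecCLM_mul {l m n : Type*} [Fintype m] [Fintype n] [DecidableEq m]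
    [DecidableEq n] (P : Matrix l m ℝ) (Q : Matrix m n ℝ) :
    mulVecCLM (P * Q) = mulVecCLM P ∘L mulVecCLM Q :=
  ContinuousLinearMap.ext fun v => (mulVec_mulVec v P Q).symm

theorem mulVecCLM_one {n : Type*} [Fintype n] [DecidableEq n] :
    mulVecCLM (1 : Matrix n n ℝ) = .id ℝ (n → ℝ) :=
  ContinuousLinearMap.ext one_mulVec

theorem intervalIntegral_mulVecCLM {m n : Type*} [Fintype m] [Fintype n] [DecidableEq n]
    {N : ℝ → Matrix m n ℝ} {a b : ℝ}
    (hN : IntervalIntegrable (fun s => mulVecCLM (N s)) volume a b) :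
    ∫ s in a..b, mulVecCLM (N s) = mulVecCLM (Matrix.of fun i j => ∫ s in a..b, N s i j) := by
  rw [← LinearEquiv.symm_apply_eq]
  ext i j
  let entry : ((n → ℝ) →L[ℝ] (m → ℝ)) →L[ℝ] ℝ :=
    LinearMap.toContinuousLinearMap ((entryLinearMap ℝ ℝ i j) ∘ₗ mulVecCLM.symm.toLinearMap)
  have hentry (P : Matrix m n ℝ) : entry (mulVecCLM P) = P i j :=
    congrFun₂ (mulVecCLM.symm_apply_apply P) i j
  calc entry (∫ s in a..b, mulVecCLM (N s))
    _ = ∫ s in a..b, entry (mulVecCLM (N s)) := (entry.intervalIntegral_comp_comm hN).symm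
    _ = ∫ s in a..b, N s i j := by simp only [hentry]

theorem mulVecCLM_add_integral_eq_id {n : Type*} [Fintype n] [DecidableEq n]
    {P : Matrix n n ℝ} {N : ℝ → Matrix n n ℝ} {a b : ℝ}
    (hN : IntervalIntegrable (fun s => mulVecCLM (N s)) volume a b)
    (hPN : ∀ i j, P i j + ∫ s in a..b, N s i j = (1 : Matrix n n ℝ) i j) :
    mulVecCLM P + ∫ s in a..b, mulVecCLM (N s) = .id ℝ (n → ℝ) := by
  rw [intervalIntegral_mulVecCLM hN, ← map_add, ← mulVecCLM_one]
  exact congrArg mulVecCLM (Matrix.ext hPN)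

theorem IsResolventFirstKind.isVolterraResolvent {d : ℕ} {K L₀ : ℝ → Matrix (Fin d) (Fin d) ℝ}
    {A : Matrix (Fin d) (Fin d) ℝ} (hres : IsResolventFirstKind K A L₀) {T : ℝ} (hT : 0 < T)
    (hK : IntegrableOn (fun t => mulVecCLM (K t)) (Ioc 0 T)) :
    IsVolterraResolvent (fun t => mulVecCLM (K t)) (mulVecCLM A) (fun t => mulVecCLM (L₀ t)) T := by
  obtain ⟨hL, hright, hleft⟩ := hres
  have hL₀ : IntegrableOn (fun t => mulVecCLM (L₀ t)) (Ioc 0 T) :=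
    integrable_mulVecCLM fun i j => (hL T hT i j).1
  refine ⟨hL₀, ?_, ?_⟩
  · filter_upwards [self_mem_ae_restrict measurableSet_Ioc, ae_intervalIntegrable_apply_comp_sub
      (ContinuousLinearMap.compL ℝ _ _ _).flip hL₀ hK] with t ht hint
    simp only [ContinuousLinearMap.flip_apply, ContinuousLinearMap.compL_apply,
      ← mulVecCLM_mul] at hint ⊢
    exact mulVecCLM_add_integral_eq_id hint (hright t ht.1)
  · filter_upwards [self_mem_ae_restrict measurableSet_Ioc, ae_intervalIntegrable_apply_comp_sub
      (ContinuousLinearMap.compL ℝ _ _ _) hL₀ hK] with t ht hint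
    simp only [ContinuousLinearMap.compL_apply, ← mulVecCLM_mul] at hint ⊢
    exact mulVecCLM_add_integral_eq_id hint (hleft t ht.1)

theorem le_mul_rpow_of_rpow_mul_add_le {a b M p t : ℝ} (ht : 0 < t) (hb : 0 ≤ b)
    (h : t ^ p * a + b ≤ M) : a ≤ M * t ^ (-p) := by
  rw [Real.rpow_neg ht.le, ← div_eq_mul_inv, le_div_iff₀' (Real.rpow_pos_of_pos ht p)]
  linarith

theorem isSingularKernel_mulVecCLM {d e : ℕ} {K K' : ℝ → Matrix (Fin d) (Fin e) ℝ} {T α M : ℝ}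
    (hK : ∀ t ∈ Ioc 0 T, ∀ i j, HasDerivAt (fun s => K s i j) (K' t i j) t)
    (hM : ∀ t ∈ Ioc (0 : ℝ) T, t ^ (1 - α) * matNorm (K t) + t ^ (2 - α) * matNorm (K' t) ≤ M) :
    IsSingularKernel (fun t => mulVecCLM (K t)) (fun t => mulVecCLM (K' t)) T α M where
  hasDerivAt t ht := hasDerivAt_mulVecCLM (hK t ht)
  norm_le t ht := by
    rw [← neg_sub]
    exact le_mul_rpow_of_rpow_mul_add_le ht.1
      (mul_nonneg (Real.rpow_nonneg ht.1.le _) (norm_nonneg _)) (hM t ht)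
  norm_deriv_le t ht := by
    rw [← neg_sub]
    exact le_mul_rpow_of_rpow_mul_add_le ht.1
      (mul_nonneg (Real.rpow_nonneg ht.1.le _) (norm_nonneg _)) ((add_comm _ _).trans_le (hM t ht))

theorem holderOnWith_of_norm_sub_le {E : Type*} [SeminormedAddCommGroup E] {z : ℝ → E}
    {S : Set ℝ} {C : ℝ} {η : ℝ≥0}
    (hz : ∀ s ∈ S, ∀ t ∈ S, ‖z t - z s‖ ≤ C * |t - s| ^ (η : ℝ)) :
    HolderOnWith C.toNNReal η z S := by
  intro t ht s hs
  rw [edist_dist, edist_dist, ENNReal.ofReal_rpow_of_nonneg dist_nonneg η.coe_nonneg,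
    ← ENNReal.ofReal, ← ENNReal.ofReal_mul' (by positivity), dist_eq_norm, Real.dist_eq]
  exact ENNReal.ofReal_le_ofReal (hz s hs t ht)

variable {d : ℕ} {T C : ℝ} {η : ℝ≥0} {z : ℝ → Fin d → ℝ}

theorem HolderOnIcc.exists_holderOnWith (hz : HolderOnIcc η T z) :
    ∃ C, HolderOnWith C η z (Icc 0 T) :=
  hz.2.imp' Real.toNNReal fun _ => holderOnWith_of_norm_sub_le

theorem HolderNormBound.nonneg (hz : HolderNormBound η T z C) (hT : 0 ≤ T) : 0 ≤ C :=
  (norm_nonneg _).trans (hz.1 0 ⟨le_rfl, hT⟩)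

theorem HolderNormBound.holderOnWith {B : ℝ≥0} (hz : HolderNormBound η T z B) :
    HolderOnWith B η z (Icc 0 T) := by
  simpa using holderOnWith_of_norm_sub_le hz.2

theorem gammaTransform_eq_volterraGamma (K : ℝ → Matrix (Fin d) (Fin d) ℝ) :
    gammaTransform K =
      volterraGamma (fun t => mulVecCLM (K t)) fun t => mulVecCLM (matDeriv K t) := rfl

theorem zTransform_eq_volterraZ (A : Matrix (Fin d) (Fin d) ℝ)
    (L₀ : ℝ → Matrix (Fin d) (Fin d) ℝ) :
    zTransform A L₀ = volterraZ (mulVecCLM A) fun t => mulVecCLM (L₀ t) := rfl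

end Matrix

theorem volterra_gammaTransform_singular_kernel_general
    {d : ℕ} (T : ℝ) (hT : 0 < T)
    (K : ℝ → Matrix (Fin d) (Fin d) ℝ)
    (A : Matrix (Fin d) (Fin d) ℝ) (L₀ : ℝ → Matrix (Fin d) (Fin d) ℝ)
    (hres : IsResolventFirstKind K A L₀)
    (α : ℝ) (hα : 0 < α)
    (hKder : ∀ t ∈ Ioc 0 T, ∀ i j, HasDerivAt (fun s => K s i j) (matDeriv K t i j) t)
    (hKbound : ∃ M : ℝ, ∀ t ∈ Ioc 0 T,
      t ^ (1 - α) * matNorm (K t) + t ^ (2 - α) * matNorm (matDeriv K t) ≤ M)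
    (η : ℝ) (hη₀ : 0 < η) (hη : 1 - α < η) :
    (∀ z : ℝ → Fin d → ℝ, z 0 = 0 → HolderOnIcc η T z →
      MemDomGamma T K z ∧ ContinuousOn (gammaTransform K z) (Icc 0 T) ∧
        gammaTransform K z 0 = 0) ∧
    (∀ z w : ℝ → Fin d → ℝ, z 0 = 0 → w 0 = 0 → HolderOnIcc η T z → HolderOnIcc η T w →
      ∀ t ∈ Icc 0 T,
        gammaTransform K (z + w) t = gammaTransform K z t + gammaTransform K w t) ∧
    (∀ (c : ℝ) (z : ℝ → Fin d → ℝ), z 0 = 0 → HolderOnIcc η T z →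
      ∀ t ∈ Icc 0 T, gammaTransform K (c • z) t = c • gammaTransform K z t) ∧
    (∃ M : ℝ, 0 ≤ M ∧ ∀ (C : ℝ) (z : ℝ → Fin d → ℝ), z 0 = 0 → HolderNormBound η T z C →
      ∀ t ∈ Icc 0 T, ‖gammaTransform K z t‖ ≤ M * C) ∧
    (∀ x : ℝ → Fin d → ℝ, ContinuousOn x (Icc 0 T) →
      HolderOnIcc η T (zTransform A L₀ x) →
      ∀ t ∈ Icc 0 T, gammaTransform K (zTransform A L₀ x) t = x t - x 0) ∧
    (∀ z : ℝ → Fin d → ℝ, z 0 = 0 → HolderOnIcc η T z →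
      ∀ t ∈ Icc 0 T, zTransform A L₀ (gammaTransform K z) t = z t) := by
  obtain ⟨M, hM⟩ := hKbound
  have hk := isSingularKernel_mulVecCLM hKder hM
  have hr := hres.isVolterraResolvent hT (hk.integrableOn hα)
  lift η to ℝ≥0 using hη₀.le
  simp only [gammaTransform_eq_volterraGamma, zTransform_eq_volterraZ]
  refine ⟨fun z hz0 hz => ?_, fun z w _ _ hz hw t ht => ?_,
    fun c z _ _ t _ => volterraGamma_smul c z t, ?_, fun x hx hz => ?_, fun z hz0 hz => ?_⟩
  · obtain ⟨C, hzC⟩ := hz.exists_holderOnWith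
    exact ⟨⟨hz.1, hk.intervalIntegrable_norm_apply hT.le hα hz.1,
        hk.intervalIntegrable_integral_norm_deriv_apply_sub hT.le hη₀ hη hzC⟩,
      hk.continuousOn_volterraGamma hT.le hη₀ hη hzC hz0, by simp [volterraGamma, hz0]⟩
  · obtain ⟨C, hzC⟩ := hz.exists_holderOnWith
    obtain ⟨C', hwC⟩ := hw.exists_holderOnWith
    exact hk.volterraGamma_add hT.le hη₀ hη hzC hwC ht
  · obtain ⟨N, hN₀, hN⟩ := hk.exists_norm_volterraGamma_le hT.le hη₀ hη
    refine ⟨N, hN₀, fun C z hz0 hz => ?_⟩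
    lift C to ℝ≥0 using hz.nonneg hT.le
    exact hN C z hz0 hz.1 hz.holderOnWith
  · obtain ⟨C, hzC⟩ := hz.exists_holderOnWith
    exact volterraGamma_volterraZ hT hk hα hr hη₀ hη hx hzC
  · obtain ⟨C, hzC⟩ := hz.exists_holderOnWith
    exact volterraZ_volterraGamma hT hk hα hr hη₀ hη hz0 hzC

/-- For a completely monotone kernel `K` with
`sup_{t ∈ (0,T]} (t^{1-α}|K(t)| + t^{2-α}|K'(t)|) < ∞` for some `α ∈ (1/2,1]`, and
`η ∈ (1-α,1]`, the operator `Γ` is well-defined and continuous linear from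
`C₀^η([0,T]; ℝ^d)` to `C₀([0,T]; ℝ^d)`, and `Γ(Z(x)) = x - x₀` whenever
`Z(x) ∈ C₀^η`, while `Z(Γ(z)) = z` for all `z ∈ C₀^η`. -/
theorem volterra_gammaTransform_singular_kernel
    {d : ℕ} (T : ℝ) (hT : 0 < T)
    (K : ℝ → Matrix (Fin d) (Fin d) ℝ)
    (A : Matrix (Fin d) (Fin d) ℝ) (L₀ : ℝ → Matrix (Fin d) (Fin d) ℝ)
    (hKcm : CompletelyMonotoneMat K)
    (hKpos : ∃ t₀ > (0:ℝ), ∀ v : Fin d → ℝ, v ≠ 0 → 0 < v ⬝ᵥ (K t₀).mulVec v)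
    (hres : IsResolventFirstKind K A L₀)
    (α : ℝ) (hα : α ∈ Set.Ioc (1/2 : ℝ) 1)
    (hKder : ∀ t > (0:ℝ), ∀ i j, HasDerivAt (fun s => K s i j) (matDeriv K t i j) t)
    (hKbound : ∃ M : ℝ, ∀ t ∈ Set.Ioc (0:ℝ) T,
      t ^ (1 - α) * matNorm (K t) + t ^ (2 - α) * matNorm (matDeriv K t) ≤ M)
    (η : ℝ) (hη : η ∈ Set.Ioc (1 - α) 1) :
    -- `C₀^η([0,T]) ⊆ D(Γ)` and `Γ` maps `C₀^η` into `C₀`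
    (∀ z : ℝ → Fin d → ℝ, z 0 = 0 → HolderOnIcc η T z →
      MemDomGamma T K z ∧ ContinuousOn (gammaTransform K z) (Set.Icc 0 T) ∧
        gammaTransform K z 0 = 0) ∧
    -- `Γ` is linear
    (∀ z w : ℝ → Fin d → ℝ, z 0 = 0 → w 0 = 0 → HolderOnIcc η T z → HolderOnIcc η T w →
      ∀ t ∈ Set.Icc (0:ℝ) T,
        gammaTransform K (z + w) t = gammaTransform K z t + gammaTransform K w t) ∧
    (∀ (c : ℝ) (z : ℝ → Fin d → ℝ), z 0 = 0 → HolderOnIcc η T z →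
      ∀ t ∈ Set.Icc (0:ℝ) T, gammaTransform K (c • z) t = c • gammaTransform K z t) ∧
    -- `Γ : C₀^η → C₀` is continuous (bounded)
    (∃ M : ℝ, 0 ≤ M ∧ ∀ (C : ℝ) (z : ℝ → Fin d → ℝ), z 0 = 0 → HolderNormBound η T z C →
      ∀ t ∈ Set.Icc (0:ℝ) T, ‖gammaTransform K z t‖ ≤ M * C) ∧
    -- `Γ(Z(x)) = x - x₀` whenever `Z(x) ∈ C₀^η`
    (∀ x : ℝ → Fin d → ℝ, ContinuousOn x (Set.Icc 0 T) →
      HolderOnIcc η T (zTransform A L₀ x) →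
      ∀ t ∈ Set.Icc (0:ℝ) T, gammaTransform K (zTransform A L₀ x) t = x t - x 0) ∧
    -- `Z(Γ(z)) = z` for `z ∈ C₀^η`
    (∀ z : ℝ → Fin d → ℝ, z 0 = 0 → HolderOnIcc η T z →
      ∀ t ∈ Set.Icc (0:ℝ) T, zTransform A L₀ (gammaTransform K z) t = z t) :=
  volterra_gammaTransform_singular_kernel_general T hT K A L₀ hres α
    (by linarith [hα.1]) (fun t ht => hKder t ht.1) hKbound η (by linarith [hα.2, hη.1]) hη.1

end
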